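/- Let A be a finite-dimensional perfect evolution algebra over a field K of dimension at least 2, with natural basis {e_i} and structure matrix (ω_ij). If ω_ij ≠ 0 for all i ≠ j, then A is a simple algebra. -/

import Mathlib

/-!
Multiplying `x` by a natural basis vector `e i` isolates a single coordinate:
`e i * x = xᵢ • (e i)²`. Hence an ideal containing an `x` with `xᵢ ≠ 0` contains `(e i)²`, and then
`(e j)²` for every `j` reachable from `i` in the digraph with an edge `i ⟶ j` whenever `e j` occurs
in `(e i)²`. If this digraph is strongly connected, a nonzero ideal contains all the squares, which
span a perfect algebra.
-/

/-- A natural basis of an evolution algebra: distinct basis vectors multiply to zero. -/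
def IsNaturalBasis {K A ι : Type*} [Semiring K] [NonUnitalNonAssocSemiring A] [Module K A]
    (b : Module.Basis ι K A) : Prop :=
  Pairwise fun i j => b i * b j = 0

/-- The digraph of an evolution algebra relative to a basis `b`, as an adjacency relation: there is
an edge from `i` to `j` when `b j` occurs in `(b i)²`, that is, when the structure matrix has a
nonzero entry in row `j` and column `i`. -/
def SquareAdj {K A ι : Type*} [Semiring K] [NonUnitalNonAssocSemiring A] [Module K A]
    (b : Module.Basis ι K A) (i j : ι) : Prop :=
  b.repr (b i * b i) j ≠ 0

theorem span_range_eq_top_of_isUnit_toMatrix {R M ι : Type*} [CommRing R] [AddCommGroup M]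
    [Module R M] [Fintype ι] [DecidableEq ι] (b : Module.Basis ι R M) {v : ι → M}
    (hv : IsUnit (b.toMatrix v)) : Submodule.span R (Set.range v) = ⊤ :=
  (b.is_basis_iff_det.2 (b.det_apply v ▸ (Matrix.isUnit_iff_isUnit_det _).1 hv)).2

theorem exists_mul_ne_zero_of_span_range_mul_self_eq_top {R A ι : Type*} [Semiring R]
    [NonUnitalNonAssocSemiring A] [Module R A] [Nontrivial A] {v : ι → A}
    (hv : Submodule.span R (Set.range fun i => v i * v i) = ⊤) : ∃ x y : A, x * y ≠ 0 := by
  by_contra! hzero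
  refine bot_ne_top (α := Submodule R A) (hv ▸ Eq.symm (Submodule.span_eq_bot.2 ?_))
  rintro _ ⟨i, rfl⟩
  exact hzero (v i) (v i)

namespace IsNaturalBasis

section Semiring

variable {K A ι : Type*} [Semiring K] [NonUnitalNonAssocSemiring A] [Module K A]
  [SMulCommClass K A A] {b : Module.Basis ι K A}

theorem mul_eq_repr_smul (hb : IsNaturalBasis b) (i : ι) (x : A) :
    b i * x = b.repr x i • (b i * b i) := by
  suffices LinearMap.mulLeft K (b i) =
      (LinearMap.toSpanSingleton K A (b i * b i)).comp (b.coord i) from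
    LinearMap.congr_fun this x
  refine b.ext fun j => ?_
  obtain rfl | hij := eq_or_ne i j
  · simp
  · simp [hb hij, Finsupp.single_eq_of_ne hij]

end Semiring

section DivisionSemiring

variable {K A ι : Type*} [DivisionSemiring K] [NonUnitalNonAssocSemiring A] [Module K A]
  [SMulCommClass K A A] {b : Module.Basis ι K A} {I : Submodule K A} {i j : ι} {x : A}

theorem mul_self_mem_of_repr_ne_zero (hb : IsNaturalBasis b) (hI : ∀ x ∈ I, ∀ a : A, a * x ∈ I)
    (hx : x ∈ I) (hxi : b.repr x i ≠ 0) : b i * b i ∈ I :=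
  (I.smul_mem_iff hxi).1 (hb.mul_eq_repr_smul i x ▸ hI x hx (b i))

theorem mul_self_mem_of_reflTransGen (hb : IsNaturalBasis b) (hI : ∀ x ∈ I, ∀ a : A, a * x ∈ I)
    (hi : b i * b i ∈ I) (hij : Relation.ReflTransGen (SquareAdj b) i j) : b j * b j ∈ I := by
  induction hij with
  | refl => exact hi
  | tail _ hadj ih => exact hb.mul_self_mem_of_repr_ne_zero hI ih hadj

theorem eq_bot_or_eq_top_of_reflTransGen (hb : IsNaturalBasis b)
    (hspan : Submodule.span K (Set.range fun i => b i * b i) = ⊤)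
    (hconn : ∀ i j, Relation.ReflTransGen (SquareAdj b) i j)
    (hI : ∀ x ∈ I, ∀ a : A, a * x ∈ I) : I = ⊥ ∨ I = ⊤ := by
  refine or_iff_not_imp_left.2 fun hbot => ?_
  obtain ⟨x, hx, hx0⟩ := Submodule.exists_mem_ne_zero_of_ne_bot hbot
  obtain ⟨i, hxi⟩ : ∃ i, b.repr x i ≠ 0 := Finsupp.ne_iff.1 (b.repr.map_ne_zero_iff.2 hx0)
  have hi : b i * b i ∈ I := hb.mul_self_mem_of_repr_ne_zero hI hx hxi
  rw [eq_top_iff, ← hspan, Submodule.span_le]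
  rintro _ ⟨j, rfl⟩
  exact hb.mul_self_mem_of_reflTransGen hI hi (hconn i j)

end DivisionSemiring

end IsNaturalBasis

theorem reflTransGen_squareAdj_of_offdiagonal_ne_zero {K A ι : Type*} [Semiring K]
    [NonUnitalNonAssocSemiring A] [Module K A] {b : Module.Basis ι K A}
    (hoff : ∀ i j : ι, i ≠ j → b.repr (b j * b j) i ≠ 0) (i j : ι) :
    Relation.ReflTransGen (SquareAdj b) i j := by
  obtain rfl | hij := eq_or_ne i j
  · exact .refl
  · exact .single (hoff j i hij.symm)

theorem simple_of_offdiagonal_nonzero_general {K A ι : Type*} [DivisionSemiring K]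
    [NonUnitalNonAssocSemiring A] [Nontrivial A] [Module K A] [SMulCommClass K A A]
    {b : Module.Basis ι K A} (hb : IsNaturalBasis b)
    (hspan : Submodule.span K (Set.range fun i => b i * b i) = ⊤)
    (hconn : ∀ i j, Relation.ReflTransGen (SquareAdj b) i j) :
    (∃ x y : A, x * y ≠ 0) ∧
      ∀ I : Submodule K A, (∀ x ∈ I, ∀ a : A, a * x ∈ I) → I = ⊥ ∨ I = ⊤ :=
  ⟨exists_mul_ne_zero_of_span_range_mul_self_eq_top hspan,
    fun _ hI => hb.eq_bot_or_eq_top_of_reflTransGen hspan hconn hI⟩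

/-- Let `A` be a finite-dimensional perfect evolution algebra over a field `K`
of dimension at least `2`, with natural basis `{e_i}` and structure matrix `(ω i j)` where
`ω i j` is the `e_i`-coordinate of `e_j²`.  If `ω i j ≠ 0` for all `i ≠ j`, then `A` is a
simple algebra. -/
theorem simple_of_offdiagonal_nonzero {K A ι : Type*} [Field K]
    [NonUnitalNonAssocCommRing A] [Module K A] [SMulCommClass K A A] [IsScalarTower K A A]
    [Fintype ι] [DecidableEq ι] (hcard : 2 ≤ Fintype.card ι)
    (b : Module.Basis ι K A) (hnat : ∀ i j : ι, i ≠ j → b i * b j = 0)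
    (hperf : IsUnit (Matrix.of fun i j : ι => b.repr (b j * b j) i))
    (hoff : ∀ i j : ι, i ≠ j → b.repr (b j * b j) i ≠ 0) :
    (∃ x y : A, x * y ≠ 0) ∧
      ∀ I : Submodule K A, (∀ x ∈ I, ∀ a : A, a * x ∈ I ∧ x * a ∈ I) → I = ⊥ ∨ I = ⊤ := by
  have : Nontrivial ι := Fintype.one_lt_card_iff_nontrivial.1 hcard
  have : Nontrivial A := b.injective.nontrivial
  obtain ⟨hmul, hideal⟩ := simple_of_offdiagonal_nonzero_general hnat
    (span_range_eq_top_of_isUnit_toMatrix b hperf)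
    (reflTransGen_squareAdj_of_offdiagonal_ne_zero hoff)
  exact ⟨hmul, fun I hI => hideal I fun x hx a => (hI x hx a).1⟩
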